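/- arXiv:1109.2860 — 5 statements merged into one kernel-verified Lean document; each statement's English description precedes it below -/
import Mathlib

section
/- Let n be an integer with n > 4 such that n is not divisible by 2 and not divisible by 3, and let ζ = exp(2πi/n) ∈ ℂ. Then the product over k = 1 to n−1 of (1 − ζ^k + ζ^{2k}) equals 1. -/
/-!
The nontrivial `n`-th roots of unity `ω` satisfy `∏ (1 - ω) = n`. If `m` is coprime to `n`, then
`ω ↦ ω ^ m` permutes them, so `∏ (1 - ω ^ m) = n` too, and since `n ≠ 0` the quotients
`(1 - ω ^ m) / (1 - ω) = 1 + ω + ⋯ + ω ^ (m - 1)` have product `1`. For `m = 2` this is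
`∏ (1 + ω) = 1`, and likewise `∏ (1 + ω ^ 3) = 1`. Divide, using
`(1 + ω) * (1 - ω + ω ^ 2) = 1 + ω ^ 3`.
-/

section

open Finset

variable {R : Type*} [CommRing R] [IsDomain R] {n : ℕ} {ζ : R}

theorem prod_Icc_one_sub_pow_of_isPrimitiveRoot (hζ : IsPrimitiveRoot ζ n) (hn : n ≠ 0) :
    ∏ k ∈ Icc 1 (n - 1), (1 - ζ ^ k) = n := by
  obtain ⟨m, rfl⟩ := Nat.exists_eq_succ_of_ne_zero hn
  rw [← Ico_add_one_right_eq_Icc, prod_Ico_eq_prod_range]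
  simpa [add_comm] using hζ.prod_one_sub_pow_eq_order

theorem prod_Icc_geom_sum_of_isPrimitiveRoot {m : ℕ} (hζ : IsPrimitiveRoot ζ n) (hm : m.Coprime n) :
    ∏ k ∈ Icc 1 (n - 1), ∑ i ∈ range m, (ζ ^ k) ^ i = 1 := by
  obtain rfl | hn := eq_or_ne n 0
  · simp
  have : NeZero n := ⟨hn⟩
  have hn_cast : (n : R) ≠ 0 := hζ.neZero'.ne
  refine mul_right_cancel₀ hn_cast ?_
  calc (∏ k ∈ Icc 1 (n - 1), ∑ i ∈ range m, (ζ ^ k) ^ i) * (n : R)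
      = ∏ k ∈ Icc 1 (n - 1), (∑ i ∈ range m, (ζ ^ k) ^ i) * (1 - ζ ^ k) := by
        rw [prod_mul_distrib, prod_Icc_one_sub_pow_of_isPrimitiveRoot hζ hn]
    _ = ∏ k ∈ Icc 1 (n - 1), (1 - (ζ ^ m) ^ k) := by
        simp only [geom_sum_mul_neg, pow_right_comm ζ m]
    _ = 1 * n := by
        rw [prod_Icc_one_sub_pow_of_isPrimitiveRoot (hζ.pow_of_coprime m hm) hn, one_mul]

theorem prod_Icc_one_add_pow_of_isPrimitiveRoot (hζ : IsPrimitiveRoot ζ n) (hn : Odd n) :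
    ∏ k ∈ Icc 1 (n - 1), (1 + ζ ^ k) = 1 := by
  simpa only [geom_sum_two, add_comm] using
    prod_Icc_geom_sum_of_isPrimitiveRoot hζ (Nat.coprime_two_left.mpr hn)

theorem prod_one_sub_zeta_add_zeta_sq_general (hζ : IsPrimitiveRoot ζ n) (h2 : ¬ 2 ∣ n)
    (h3 : ¬ 3 ∣ n) : ∏ k ∈ Icc 1 (n - 1), (1 - ζ ^ k + ζ ^ (2 * k)) = 1 := by
  have hn_odd : Odd n := Nat.odd_iff.mpr (Nat.two_dvd_ne_zero.mp h2)
  have hζ_cube : IsPrimitiveRoot (ζ ^ 3) n :=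
    hζ.pow_of_coprime 3 (Nat.prime_three.coprime_iff_not_dvd.mpr h3)
  calc ∏ k ∈ Icc 1 (n - 1), (1 - ζ ^ k + ζ ^ (2 * k))
      = ∏ k ∈ Icc 1 (n - 1), (1 + ζ ^ k) * (1 - ζ ^ k + ζ ^ (2 * k)) := by
        rw [prod_mul_distrib, prod_Icc_one_add_pow_of_isPrimitiveRoot hζ hn_odd, one_mul]
    _ = ∏ k ∈ Icc 1 (n - 1), (1 + (ζ ^ 3) ^ k) := prod_congr rfl fun k _ => by ring
    _ = 1 := prod_Icc_one_add_pow_of_isPrimitiveRoot hζ_cube hn_odd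

end

/-- Let `n > 4` be an integer not divisible by `2` or `3`, and let
`ζ = exp(2πi/n)`.  Then `∏_{k=1}^{n-1} (1 - ζ^k + ζ^{2k}) = 1`. -/
theorem prod_one_sub_zeta_add_zeta_sq (n : ℕ) (hn : 4 < n) (h2 : ¬ (2 ∣ n))
    (h3 : ¬ (3 ∣ n)) (ζ : ℂ) (hζ : ζ = Complex.exp (2 * Real.pi * Complex.I / n)) :
    ∏ k ∈ Finset.Icc 1 (n - 1), (1 - ζ ^ k + ζ ^ (2 * k)) = 1 :=
  prod_one_sub_zeta_add_zeta_sq_general (hζ ▸ Complex.isPrimitiveRoot_exp n (by lia)) h2 h3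
end

section
/- Let p be a prime with p ≥ 5, and let ζ be a primitive p-th root of unity in the p-th cyclotomic field over ℚ. Then the field norm from ℚ(ζ) to ℚ of 1 − ζ + ζ² equals 1. -/
/-!
If `3 ∤ n` and `Φₙ` is irreducible, the primitive `n`-th roots of unity `ζ` and `ζ ^ 3` are
conjugate, hence so are `-ζ` and `(-ζ) ^ 3`. In `(1 - ζ + ζ ^ 2) * (-ζ - 1) = (-ζ) ^ 3 - 1` the
elements `-ζ - 1` and `(-ζ) ^ 3 - 1` therefore have the same norm, which cancels.
-/

section Field

open Polynomial IntermediateField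

variable {K L : Type*} [Field K] [Field L] [Algebra K L]

theorem finrank_adjoin_simple_eq_of_isConjRoot [FiniteDimensional K L] {x y : L}
    (h : IsConjRoot K x y) : Module.finrank K⟮x⟯ L = Module.finrank K⟮y⟯ L := by
  have degree_eq : Module.finrank K K⟮x⟯ = Module.finrank K K⟮y⟯ := by
    rw [adjoin.finrank (.of_finite K x), adjoin.finrank (.of_finite K y), isConjRoot_def.1 h]
  refine Nat.eq_of_mul_eq_mul_left (Module.finrank_pos (R := K) (M := K⟮x⟯)) ?_
  rw [Module.finrank_mul_finrank, degree_eq, Module.finrank_mul_finrank]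

theorem norm_eq_of_isConjRoot [FiniteDimensional K L] {x y : L} (h : IsConjRoot K x y) :
    Algebra.norm K x = Algebra.norm K y := by
  apply (algebraMap K (AlgebraicClosure K)).injective
  rw [Algebra.norm_eq_prod_roots _ (IsAlgClosed.splits _),
    Algebra.norm_eq_prod_roots _ (IsAlgClosed.splits _),
    finrank_adjoin_simple_eq_of_isConjRoot h, isConjRoot_def.1 h]

theorem norm_geom_sum_eq_one_of_isConjRoot_pow [FiniteDimensional K L] {x : L} {k : ℕ}
    (hx : x ≠ 1) (h : IsConjRoot K (x ^ k) x) :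
    Algebra.norm K (∑ i ∈ Finset.range k, x ^ i) = 1 := by
  have norm_pow_sub_one : Algebra.norm K (x ^ k - 1) = Algebra.norm K (x - 1) := by
    simpa only [map_one] using norm_eq_of_isConjRoot (h.sub_algebraMap 1)
  have norm_ne_zero : Algebra.norm K (x - 1) ≠ 0 :=
    Algebra.norm_ne_zero_iff.2 (sub_ne_zero.2 hx)
  rwa [← geom_sum_mul, map_mul, mul_eq_right₀ norm_ne_zero] at norm_pow_sub_one

theorem isConjRoot_of_isPrimitiveRoot {n : ℕ} (hirr : Irreducible (cyclotomic n K)) {ζ η : L}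
    (hζ : IsPrimitiveRoot ζ n) (hη : IsPrimitiveRoot η n) : IsConjRoot K ζ η := by
  have : NeZero n := ⟨by rintro rfl; exact not_irreducible_one (cyclotomic_zero K ▸ hirr)⟩
  have : NeZero (n : L) := hζ.neZero'
  have : NeZero (n : K) := .nat_of_neZero (algebraMap K L)
  rw [isConjRoot_def, ← hζ.minpoly_eq_cyclotomic_of_irreducible hirr,
    ← hη.minpoly_eq_cyclotomic_of_irreducible hirr]

theorem norm_one_sub_zeta_add_zeta_sq_general [FiniteDimensional K L] {n : ℕ}
    (hirr : Irreducible (cyclotomic n K)) (hn2 : n ≠ 2) (hn3 : ¬ 3 ∣ n) {ζ : L}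
    (hζ : IsPrimitiveRoot ζ n) : Algebra.norm K (1 - ζ + ζ ^ 2) = 1 := by
  rcases eq_or_ne (-ζ) 1 with hneg | hneg
  · -- Here `ζ = -1`, which for `n ≠ 2` happens only when `n = 1` and `K` has characteristic two.
    have n_dvd_two : n ∣ 2 := hζ.dvd_of_pow_eq_one 2 (by rw [← neg_sq, hneg, one_pow])
    obtain rfl : n = 1 := ((Nat.dvd_prime Nat.prime_two).1 n_dvd_two).resolve_right hn2
    obtain rfl : ζ = 1 := IsPrimitiveRoot.one_right_iff.1 hζ
    rw [sub_self, zero_add, one_pow, map_one]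
  · have conj_cube : IsConjRoot K ((-ζ) ^ 3) (-ζ) := by
      rw [Odd.neg_pow (by decide)]
      exact (isConjRoot_of_isPrimitiveRoot hirr
        (hζ.pow_of_coprime 3 ((Nat.Prime.coprime_iff_not_dvd Nat.prime_three).2 hn3)) hζ).neg
    have geom_sum : ∑ i ∈ Finset.range 3, (-ζ) ^ i = 1 - ζ + ζ ^ 2 := by
      simp only [Finset.sum_range_succ, Finset.sum_range_zero]
      ring
    rw [← geom_sum, norm_geom_sum_eq_one_of_isConjRoot_pow hneg conj_cube]

end Field

/-- Let `p ≥ 5` be a prime and `ζ` a primitive `p`-th root of unity in the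
`p`-th cyclotomic field over `ℚ`.  Then `N_{ℚ(ζ)/ℚ}(1 - ζ + ζ^2) = 1`. -/
theorem norm_one_sub_zeta_add_zeta_sq (p : ℕ) (hp : p.Prime) (hp5 : 5 ≤ p)
    (ζ : CyclotomicField p ℚ) (hζ : IsPrimitiveRoot ζ p) :
    Algebra.norm ℚ (1 - ζ + ζ ^ 2) = 1 := by
  have three_not_dvd : ¬ 3 ∣ p := (Nat.prime_dvd_prime_iff_eq Nat.prime_three hp).not.2 (by lia)
  exact norm_one_sub_zeta_add_zeta_sq_general (Polynomial.cyclotomic.irreducible_rat hp.pos)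
    (by lia) three_not_dvd hζ
end

section
/- Let p be an odd prime and let ζ = exp(2πi/p) ∈ ℂ. Then the product over k = 1 to p−1 of (1 − ζ^k − ζ^{2k}) equals the p-th Lucas number L(p). -/
/-!
In an algebraically closed field, the roots `a`, `b` of `X ^ 2 - X - 1` satisfy `a + b = 1` and
`a * b = -1`, so that `1 - x - x ^ 2 = (1 - a * x) * (1 - b * x)`. As `x` runs through the `n`-th
roots of unity, the product of the values is
`(1 - a ^ n) * (1 - b ^ n) = 1 - (a ^ n + b ^ n) + (-1) ^ n`, in which `a ^ n + b ^ n` is the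
`n`-th Lucas number, while the factor at `x = 1` is `-1`.
-/

open Finset Polynomial

section Fibonacci

variable {R : Type*} [CommRing R]

theorem pow_succ_eq_fib_mul_add_fib {x : R} (hx : x ^ 2 = x + 1) (n : ℕ) :
    x ^ (n + 1) = Nat.fib (n + 1) * x + Nat.fib n := by
  induction n with
  | zero => simp
  | succ n ih =>
    rw [pow_succ, ih, Nat.fib_add_two]
    push_cast
    linear_combination (Nat.fib (n + 1) : R) * hx

theorem pow_add_pow_eq_fib_add_fib {a b : R} (hadd : a + b = 1) (hmul : a * b = -1)
    {n : ℕ} (hn : 0 < n) :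
    a ^ n + b ^ n = Nat.fib (n - 1) + Nat.fib (n + 1) := by
  obtain ⟨m, rfl⟩ := Nat.exists_eq_add_of_lt hn
  have ha : a ^ 2 = a + 1 := by linear_combination a * hadd - hmul
  have hb : b ^ 2 = b + 1 := by linear_combination b * hadd - hmul
  rw [zero_add, Nat.add_sub_cancel, pow_succ_eq_fib_mul_add_fib ha,
    pow_succ_eq_fib_mul_add_fib hb, Nat.fib_add_two]
  push_cast
  linear_combination (Nat.fib (m + 1) : R) * hadd

end Fibonacci

theorem exists_add_eq_and_mul_eq {K : Type*} [Field K] [IsAlgClosed K] (s t : K) :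
    ∃ a b : K, a + b = s ∧ a * b = t := by
  have hdeg : (C 1 * X ^ 2 + C (-s) * X + C t).degree ≠ 0 := by
    rw [degree_quadratic one_ne_zero]
    decide
  obtain ⟨a, ha⟩ := IsAlgClosed.exists_root _ hdeg
  refine ⟨a, s - a, add_sub_cancel a s, ?_⟩
  simp only [IsRoot.def, eval_add, eval_mul, eval_C, eval_pow, eval_X] at ha
  linear_combination -ha

section RootsOfUnity

variable {R : Type*} [CommRing R] [IsDomain R] {ζ : R} {n : ℕ}

theorem prod_range_one_sub_pow_mul (hζ : IsPrimitiveRoot ζ n) (hn : 0 < n) (a : R) :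
    ∏ k ∈ range n, (1 - ζ ^ k * a) = 1 - a ^ n := by
  have h := congrArg (eval 1) (X_pow_sub_C_eq_prod hζ hn (Eq.refl (a ^ n)))
  simpa only [eval_prod, eval_sub, eval_pow, eval_X, eval_C, one_pow] using h.symm

theorem prod_range_one_sub_add_mul_pow_add_mul_mul_pow (hζ : IsPrimitiveRoot ζ n) (hn : 0 < n)
    (a b : R) :
    ∏ k ∈ range n, (1 - (a + b) * ζ ^ k + a * b * ζ ^ (2 * k)) = (1 - a ^ n) * (1 - b ^ n) := by
  rw [← prod_range_one_sub_pow_mul hζ hn, ← prod_range_one_sub_pow_mul hζ hn,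
    ← prod_mul_distrib]
  exact prod_congr rfl fun k _ ↦ by ring

theorem prod_range_one_sub_pow_sub_pow_two_mul_of_add_eq_one (hζ : IsPrimitiveRoot ζ n)
    (hn : 0 < n) {a b : R} (hadd : a + b = 1) (hmul : a * b = -1) :
    ∏ k ∈ range n, (1 - ζ ^ k - ζ ^ (2 * k))
      = 1 - (Nat.fib (n - 1) + Nat.fib (n + 1)) + (-1) ^ n := by
  calc ∏ k ∈ range n, (1 - ζ ^ k - ζ ^ (2 * k))
    _ = (1 - a ^ n) * (1 - b ^ n) := by
      rw [← prod_range_one_sub_add_mul_pow_add_mul_mul_pow hζ hn, hadd, hmul]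
      exact prod_congr rfl fun k _ ↦ by ring
    _ = 1 - (a ^ n + b ^ n) + (a * b) ^ n := by ring
    _ = 1 - (Nat.fib (n - 1) + Nat.fib (n + 1)) + (-1) ^ n := by
      rw [pow_add_pow_eq_fib_add_fib hadd hmul hn, hmul]

theorem prod_range_one_sub_pow_sub_pow_two_mul (hζ : IsPrimitiveRoot ζ n) (hn : 0 < n) :
    ∏ k ∈ range n, (1 - ζ ^ k - ζ ^ (2 * k))
      = 1 - (Nat.fib (n - 1) + Nat.fib (n + 1)) + (-1) ^ n := by
  let K := AlgebraicClosure (FractionRing R)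
  have hinj : Function.Injective (algebraMap R K) :=
    (algebraMap (FractionRing R) K).injective.comp (IsFractionRing.injective R (FractionRing R))
  obtain ⟨a, b, hadd, hmul⟩ := exists_add_eq_and_mul_eq (1 : K) (-1)
  apply hinj
  simpa only [map_prod, map_sub, map_add, map_neg, map_one, map_pow, map_natCast] using
    prod_range_one_sub_pow_sub_pow_two_mul_of_add_eq_one (hζ.map_of_injective hinj) hn hadd hmul

theorem prod_one_sub_zeta_sub_zeta_sq_eq_lucas_general (hζ : IsPrimitiveRoot ζ n) (hn : 0 < n) :
    ∏ k ∈ Icc 1 (n - 1), (1 - ζ ^ k - ζ ^ (2 * k))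
      = Nat.fib (n - 1) + Nat.fib (n + 1) - 1 - (-1) ^ n := by
  have hsplit := prod_range_eq_mul_Ico (fun k ↦ 1 - ζ ^ k - ζ ^ (2 * k)) hn
  rw [prod_range_one_sub_pow_sub_pow_two_mul hζ hn] at hsplit
  rw [Icc_sub_one_right_eq_Ico_of_not_isMin (not_isMin_of_lt hn)]
  linear_combination hsplit

end RootsOfUnity

/-- Let `p` be an odd prime and `ζ = exp(2πi/p)`.  Then
`∏_{k=1}^{p-1} (1 - ζ^k - ζ^{2k}) = L(p)`, the `p`-th Lucas number,
where `L(n) = F(n-1) + F(n+1)`. -/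
theorem prod_one_sub_zeta_sub_zeta_sq_eq_lucas (p : ℕ) (hp : p.Prime) (hodd : Odd p)
    (ζ : ℂ) (hζ : ζ = Complex.exp (2 * Real.pi * Complex.I / p)) :
    ∏ k ∈ Finset.Icc 1 (p - 1), (1 - ζ ^ k - ζ ^ (2 * k))
      = (Nat.fib (p - 1) + Nat.fib (p + 1) : ℂ) := by
  have hprim : IsPrimitiveRoot ζ p := hζ ▸ Complex.isPrimitiveRoot_exp p hp.ne_zero
  rw [prod_one_sub_zeta_sub_zeta_sq_eq_lucas_general hprim hp.pos, hodd.neg_one_pow]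
  ring
end

section
/- Let n be an integer with n > 4 such that n is not divisible by 2 and not divisible by 3. Then the product over k = 1 to n−1 of cos(3πk/n) equals the product over k = 1 to n−1 of cos(πk/n). -/
/-!
For odd `n` the function `m ↦ (-1) ^ m * cos (π m / n)` is `n`-periodic, so its product over the
nonzero residues modulo `n` is unchanged when `k` is replaced by `a * k` with `a` coprime to `n`.
For odd `a` the signs `(-1) ^ (a * k)` and `(-1) ^ k` agree and cancel from both products. For even
`n` both products vanish, because of the factor at `k = n / 2`.
-/

open Finset Real

theorem bijOn_mul_mod {n a : ℕ} (ha : n.Coprime a) :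
    Set.BijOn (fun k ↦ a * k % n) (Set.Icc 1 (n - 1)) (Set.Icc 1 (n - 1)) := by
  have hmaps : Set.MapsTo (fun k ↦ a * k % n) (Set.Icc 1 (n - 1)) (Set.Icc 1 (n - 1)) := by
    rintro k ⟨hk_pos, hk_le⟩
    have hndvd : ¬ n ∣ a * k := fun h ↦
      Nat.not_dvd_of_pos_of_lt hk_pos (by lia) (ha.dvd_of_dvd_mul_left h)
    exact ⟨Nat.pos_of_ne_zero (mt Nat.dvd_of_mod_eq_zero hndvd),
      Nat.le_sub_one_of_lt (Nat.mod_lt _ (by lia))⟩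
  have hinj : Set.InjOn (fun k ↦ a * k % n) (Set.Icc 1 (n - 1)) := by
    rintro k ⟨_, hk⟩ l ⟨_, hl⟩ hkl
    exact (Nat.ModEq.cancel_left_of_coprime ha hkl).eq_of_lt_of_lt (by lia) (by lia)
  exact ((Set.finite_Icc 1 (n - 1)).injOn_iff_bijOn_of_mapsTo hmaps).mp hinj

theorem prod_Icc_mul_left_of_periodic {M : Type*} [CommMonoid M] {f : ℕ → M} {n a : ℕ}
    (hf : Function.Periodic f n) (ha : n.Coprime a) :
    ∏ k ∈ Icc 1 (n - 1), f (a * k) = ∏ k ∈ Icc 1 (n - 1), f k := by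
  have hbij : Set.BijOn (fun k ↦ a * k % n) (Icc 1 (n - 1)) (Icc 1 (n - 1)) := by
    simpa only [coe_Icc] using bijOn_mul_mod ha
  exact prod_nbij _ hbij.mapsTo hbij.injOn hbij.surjOn fun k _ ↦ (hf.map_mod_nat _).symm

theorem periodic_neg_one_pow_mul_cos {n : ℕ} (hn : Odd n) :
    Function.Periodic (fun m : ℕ ↦ (-1) ^ m * cos (π * m / n)) n := by
  intro m
  have hn0 : (n : ℝ) ≠ 0 := Nat.cast_ne_zero.mpr hn.pos.ne'
  have hshift : π * (m + n : ℕ) / n = π * m / n + π := by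
    push_cast
    field_simp
  simp only [hshift, cos_add_pi, pow_add, hn.neg_one_pow, mul_neg_one, neg_mul_neg]

theorem prod_cos_mul_pi_eq_prod_cos_pi_of_odd {a n : ℕ} (ha : Odd a) (hn : Odd n)
    (hna : n.Coprime a) :
    ∏ k ∈ Icc 1 (n - 1), cos (a * π * k / n) = ∏ k ∈ Icc 1 (n - 1), cos (π * k / n) := by
  have hsign : ∏ k ∈ Icc 1 (n - 1), (-1 : ℝ) ^ k ≠ 0 :=
    prod_ne_zero_iff.mpr fun k _ ↦ pow_ne_zero k (neg_ne_zero.mpr one_ne_zero)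
  have hterm (k : ℕ) : (-1) ^ k * cos (a * π * k / n)
      = (-1) ^ (a * k) * cos (π * (a * k : ℕ) / n) := by
    rw [pow_mul, ha.neg_one_pow, Nat.cast_mul, mul_left_comm π, mul_assoc (a : ℝ)]
  refine mul_left_cancel₀ hsign ?_
  calc (∏ k ∈ Icc 1 (n - 1), (-1) ^ k) * ∏ k ∈ Icc 1 (n - 1), cos (a * π * k / n)
    _ = ∏ k ∈ Icc 1 (n - 1), (-1) ^ (a * k) * cos (π * (a * k : ℕ) / n) := by
      simp only [← prod_mul_distrib, hterm]
    _ = ∏ k ∈ Icc 1 (n - 1), (-1) ^ k * cos (π * k / n) :=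
      prod_Icc_mul_left_of_periodic (periodic_neg_one_pow_mul_cos hn) hna
    _ = (∏ k ∈ Icc 1 (n - 1), (-1) ^ k) * ∏ k ∈ Icc 1 (n - 1), cos (π * k / n) :=
      prod_mul_distrib

theorem prod_cos_mul_pi_eq_zero {a n : ℕ} (ha : Odd a) (hn : Even n) (hn0 : n ≠ 0) :
    ∏ k ∈ Icc 1 (n - 1), cos (a * π * k / n) = 0 := by
  obtain ⟨m, rfl⟩ := hn
  obtain ⟨b, rfl⟩ := ha
  have hm : (m : ℝ) ≠ 0 := Nat.cast_ne_zero.mpr (by lia)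
  refine prod_eq_zero (i := m) (mem_Icc.mpr (by lia)) (cos_eq_zero_iff.mpr ⟨b, ?_⟩)
  push_cast
  field_simp
  ring

theorem prod_cos_three_pi_eq_prod_cos_pi_general {a n : ℕ} (ha : Odd a) (hna : n.Coprime a) :
    ∏ k ∈ Icc 1 (n - 1), cos (a * π * k / n) = ∏ k ∈ Icc 1 (n - 1), cos (π * k / n) := by
  obtain rfl | hn0 := eq_or_ne n 0
  · rfl
  obtain heven | hodd := n.even_or_odd
  · have hone := prod_cos_mul_pi_eq_zero odd_one heven hn0
    rw [Nat.cast_one, one_mul] at hone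
    rw [prod_cos_mul_pi_eq_zero ha heven hn0, hone]
  · exact prod_cos_mul_pi_eq_prod_cos_pi_of_odd ha hodd hna

/-- Let `n > 4` be an integer not divisible by `2` or `3`.  Then
`∏_{k=1}^{n-1} cos(3πk/n) = ∏_{k=1}^{n-1} cos(πk/n)`. -/
theorem prod_cos_three_pi_eq_prod_cos_pi (n : ℕ) (hn : 4 < n) (h2 : ¬ (2 ∣ n))
    (h3 : ¬ (3 ∣ n)) :
    ∏ k ∈ Finset.Icc 1 (n - 1), Real.cos (3 * Real.pi * k / n)
      = ∏ k ∈ Finset.Icc 1 (n - 1), Real.cos (Real.pi * k / n) := by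
  have hcop : n.Coprime 3 := ((Nat.Prime.coprime_iff_not_dvd Nat.prime_three).mpr h3).symm
  exact_mod_cast prod_cos_three_pi_eq_prod_cos_pi_general (by decide : Odd 3) hcop
end

section
/- Let p be a prime with p ≥ 5. Consider subsets S of ℤ/pℤ such that no two distinct elements of S are adjacent, i.e., for all i, j in S with i ≠ j one has j ≠ i + 1 and j ≠ i − 1. Then the sum of (−1)^{|S|} over all such subsets S (including the empty set) equals 1. -/
/-!
Domino placements on a circle of length `n` are the independent sets of the `n`-cycle, so the
alternating sum is the independence polynomial of the cycle at `-1`. Deleting the end of a path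
gives the recurrence `a (m + 2) = a (m + 1) - a m`, which is that of the rescaled Chebyshev
polynomials of the second kind `S` at `1`; deleting a vertex of the cycle then yields the difference
`S n - S (n - 2)`, which is the rescaled Chebyshev polynomial of the first kind `C n`. Its value
`2 cos (n π / 3)` at `1` is `6`-periodic and even in `n`, and equals `1` at `n = ±1`.
-/

open Finset Polynomial SimpleGraph

theorem isIndepSet_insert_iff {V : Type*} (G : SimpleGraph V) {v : V} {S : Set V} (hv : v ∉ S) :
    G.IsIndepSet (insert v S) ↔ G.IsIndepSet S ∧ ∀ u ∈ S, ¬G.Adj v u := by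
  simp only [IsIndepSet, Set.pairwise_insert_of_notMem hv, G.adj_comm _ v, and_self]

theorem isIndepSet_image_iff {V W : Type*} {G : SimpleGraph V} {H : SimpleGraph W} {f : V → W}
    {S : Set V} (hf : Set.InjOn f S)
    (hadj : ∀ u ∈ S, ∀ v ∈ S, H.Adj (f u) (f v) ↔ G.Adj u v) :
    H.IsIndepSet (f '' S) ↔ G.IsIndepSet S := by
  rw [IsIndepSet, hf.pairwise_image]
  exact forall₂_congr fun u hu => forall₂_congr fun v hv =>
    imp_congr_right fun _ => (hadj u hu v hv).not

theorem isIndepSet_circulantGraph_singleton_iff {M : Type*} [AddCommGroup M] {d : M} {S : Set M} :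
    (circulantGraph {d}).IsIndepSet S ↔
      ∀ i ∈ S, ∀ j ∈ S, i ≠ j → j ≠ i + d ∧ j ≠ i - d := by
  refine forall₂_congr fun i _ => forall₂_congr fun j _ => imp_congr_right fun hij => ?_
  simp only [circulantGraph_adj, Set.mem_singleton_iff]
  grind

section IndepSum

variable {V W R : Type*} [DecidableEq V] [DecidableEq W] [CommSemiring R]
  (G : SimpleGraph V) [DecidableRel G.Adj] {H : SimpleGraph W} [DecidableRel H.Adj]

/-- The independence polynomial of the subgraph of `G` induced on `A`, evaluated at `x`. Keeping `A`
as a finset of vertices of a fixed `G` avoids subtypes when vertices are deleted. -/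
def indepSum (x : R) (A : Finset V) : R :=
  ∑ S ∈ A.powerset, if G.IsIndepSet (S : Set V) then x ^ #S else 0

@[simp]
theorem indepSum_empty (x : R) : indepSum G x ∅ = 1 := by
  simp [indepSum, IsIndepSet]

theorem indepSum_insert (x : R) {v : V} {A : Finset V} (hv : v ∉ A) :
    indepSum G x (insert v A) = indepSum G x A + x * indepSum G x {u ∈ A | ¬G.Adj v u} := by
  have powerset_nonneighbors : ({u ∈ A | ¬G.Adj v u} : Finset V).powerset =
      {S ∈ A.powerset | ∀ u ∈ S, ¬G.Adj v u} := by
    ext S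
    simp only [mem_powerset, mem_filter, subset_iff]
    grind
  simp only [indepSum, powerset_nonneighbors, sum_filter, mul_sum,
    sum_powerset_insert hv]
  congr 1
  refine sum_congr rfl fun S hS => ?_
  have hvS : v ∉ S := fun h => hv (mem_powerset.1 hS h)
  simp only [coe_insert, isIndepSet_insert_iff G (mem_coe.not.2 hvS), mem_coe,
    card_insert_of_notMem hvS, pow_succ', mul_ite, mul_zero,
    and_comm (a := G.IsIndepSet _), ite_and]

variable {G}

theorem indepSum_image (x : R) {f : V → W} {A : Finset V} (hf : Set.InjOn f A)
    (hadj : ∀ u ∈ A, ∀ v ∈ A, H.Adj (f u) (f v) ↔ G.Adj u v) :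
    indepSum H x (A.image f) = indepSum G x A := by
  simp only [indepSum, powerset_image]
  rw [sum_image (image_injOn_powerset_of_injOn hf)]
  refine sum_congr rfl fun S hS => ?_
  rw [mem_powerset] at hS
  have hfS : Set.InjOn f S := hf.mono hS
  have hadjS : ∀ u ∈ S, ∀ v ∈ S, H.Adj (f u) (f v) ↔ G.Adj u v :=
    fun u hu v hv => hadj u (hS hu) v (hS hv)
  simp only [coe_image, isIndepSet_image_iff hfS hadjS, card_image_of_injOn hfS]

end IndepSum

section Chebyshev

variable (R : Type*) [CommRing R]

theorem chebyshev_C_eq_S_sub_S (n : ℤ) :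
    Chebyshev.C R n = Chebyshev.S R n - Chebyshev.S R (n - 2) := by
  linear_combination Chebyshev.C_eq_S_sub_X_mul_S R n + Chebyshev.S_eq R n

theorem antiperiodic_chebyshev_C_eval_one :
    Function.Antiperiodic (fun n : ℤ => (Chebyshev.C R n).eval 1) 3 := by
  intro n
  have add_three : Chebyshev.C R (n + 3) =
      X * (X * Chebyshev.C R (n + 1) - Chebyshev.C R n) - Chebyshev.C R (n + 1) := by
    rw [← Chebyshev.C_add_two, show n + 3 = n + 1 + 2 by ring, Chebyshev.C_add_two, add_assoc n,
      one_add_one_eq_two]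
  simp [add_three]

theorem chebyshev_C_eval_one_of_coprime_six {n : ℕ} (hn : n.Coprime 6) :
    (Chebyshev.C R n).eval 1 = 1 := by
  have periodic : Function.Periodic (fun n : ℤ => (Chebyshev.C R n).eval 1) (2 * 3) :=
    (antiperiodic_chebyshev_C_eval_one R).periodic_two_mul
  have h2 : ¬2 ∣ n := fun h => Nat.not_coprime_of_dvd_of_dvd one_lt_two h (by norm_num) hn
  have h3 : ¬3 ∣ n := fun h => Nat.not_coprime_of_dvd_of_dvd (by norm_num) h (by norm_num) hn
  obtain ⟨q, hq | hq⟩ : ∃ q : ℤ, n = 1 + q * (2 * 3) ∨ n = -1 + q * (2 * 3) :=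
    ⟨(n + 1) / 6, by lia⟩
  · rw [hq]
    exact (periodic.int_mul q 1).trans (by simp)
  · rw [hq]
    exact (periodic.int_mul q (-1)).trans (by simp)

end Chebyshev

theorem indepSum_path_add_two {R : Type*} [CommSemiring R] (x : R) (a : ℤ) (m : ℕ) :
    indepSum (circulantGraph {(1 : ℤ)}) x (Ico a (a + (m + 2 : ℕ))) =
      indepSum (circulantGraph {(1 : ℤ)}) x (Ico a (a + (m + 1 : ℕ))) +
        x * indepSum (circulantGraph {(1 : ℤ)}) x (Ico a (a + m)) := by
  have path_succ : Ico a (a + (m + 2 : ℕ)) =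
      insert (a + (m + 1 : ℕ)) (Ico a (a + (m + 1 : ℕ))) := by
    grind
  have nonneighbors : {k ∈ Ico a (a + (m + 1 : ℕ)) |
      ¬(circulantGraph {1}).Adj (a + (m + 1 : ℕ)) k} = Ico a (a + m) := by
    ext k
    simp only [circulantGraph_adj, mem_filter, mem_Ico, Set.mem_singleton_iff]
    lia
  rw [path_succ, indepSum_insert _ _ (by simp), nonneighbors]

theorem indepSum_path_neg_one (R : Type*) [CommRing R] (a : ℤ) (m : ℕ) :
    indepSum (circulantGraph {(1 : ℤ)}) (-1 : R) (Ico a (a + m)) =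
      (Chebyshev.S R (m + 1)).eval 1 := by
  induction m using Nat.twoStepInduction with
  | zero => simp
  | one =>
    have path_one : Ico a (a + (1 : ℕ)) = insert a ∅ := by grind
    rw [path_one, indepSum_insert _ _ (notMem_empty a)]
    simp [one_add_one_eq_two, Chebyshev.S_two]
  | more m ih₀ ih₁ =>
    have index_eq : ((m + 2 : ℕ) : ℤ) + 1 = (m + 1 : ℤ) + 2 := by lia
    rw [indepSum_path_add_two, ih₀, ih₁, index_eq, Chebyshev.S_add_two]
    simp [sub_eq_add_neg]

section Cycle

variable {n : ℕ}

theorem intCast_eq_intCast_iff_of_abs_sub_lt {k l : ℤ} (h : |k - l| < n) :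
    (k : ZMod n) = l ↔ k = l := by
  refine ⟨fun hkl => ?_, congr_arg _⟩
  have hdvd : (n : ℤ) ∣ k - l := (ZMod.intCast_eq_intCast_iff_dvd_sub l k n).1 hkl.symm
  exact sub_eq_zero.1 (Int.eq_zero_of_abs_lt_dvd hdvd h)

theorem injOn_intCast_Ico : Set.InjOn (Int.cast : ℤ → ZMod n) (Ico 1 (n : ℤ)) := by
  intro k hk l hl hkl
  rw [mem_coe, mem_Ico] at hk hl
  exact (intCast_eq_intCast_iff_of_abs_sub_lt (by grind)).1 hkl

theorem circulantGraph_one_adj_intCast_iff {k l : ℤ} (hk : k ∈ Ico 1 (n : ℤ))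
    (hl : l ∈ Ico 1 (n : ℤ)) :
    (circulantGraph {(1 : ZMod n)}).Adj k l ↔ (circulantGraph {1}).Adj k l := by
  have sub_eq_one_iff {i j : ℤ} (hi : i ∈ Ico 1 (n : ℤ)) (hj : j ∈ Ico 1 (n : ℤ)) :
      (i - j : ZMod n) = 1 ↔ i - j = 1 := by
    rw [mem_Ico] at hi hj
    exact_mod_cast intCast_eq_intCast_iff_of_abs_sub_lt (k := i - j) (l := 1) (n := n) (by grind)
  simp only [circulantGraph_adj, Set.mem_singleton_iff, sub_eq_one_iff hk hl, sub_eq_one_iff hl hk,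
    injOn_intCast_Ico.eq_iff hk hl]

theorem intCast_ne_zero_of_mem_Ico {k : ℤ} (hk : k ∈ Ico 1 (n : ℤ)) : (k : ZMod n) ≠ 0 := by
  rw [mem_Ico] at hk
  rw [← Int.cast_zero, Ne, intCast_eq_intCast_iff_of_abs_sub_lt (by grind)]
  lia

theorem circulantGraph_one_adj_zero_intCast_iff {k : ℤ} (hk : k ∈ Ico 1 (n : ℤ)) :
    (circulantGraph {(1 : ZMod n)}).Adj 0 k ↔ k = 1 ∨ k = n - 1 := by
  have hk' := mem_Ico.1 hk
  have eq_one_iff : (k : ZMod n) = 1 ↔ k = 1 := by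
    rw [← intCast_eq_intCast_iff_of_abs_sub_lt (n := n) (by grind), Int.cast_one]
  have neg_eq_one_iff : -(k : ZMod n) = 1 ↔ k = n - 1 := by
    rw [← intCast_eq_intCast_iff_of_abs_sub_lt (n := n) (by grind), neg_eq_iff_eq_neg]
    simp
  simp only [circulantGraph_adj, Set.mem_singleton_iff, zero_sub, sub_zero, eq_one_iff,
    neg_eq_one_iff, (intCast_ne_zero_of_mem_Ico hk).symm, not_false_eq_true, true_and, or_comm]

theorem insert_zero_image_intCast_Ico [NeZero n] :
    insert 0 ((Ico 1 (n : ℤ)).image (Int.cast : ℤ → ZMod n)) = univ := by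
  refine eq_univ_of_forall fun a => mem_insert.2 <| or_iff_not_imp_left.2 fun ha => ?_
  have val_pos : 0 < a.val := ZMod.val_pos.2 ha
  exact mem_image.2 ⟨a.val, by grind [a.val_lt], by simp⟩

theorem indepSum_cycle {R : Type*} [CommSemiring R] (x : R) [NeZero n] :
    indepSum (circulantGraph {(1 : ZMod n)}) x univ =
      indepSum (circulantGraph {(1 : ℤ)}) x (Ico 1 n) +
        x * indepSum (circulantGraph {(1 : ℤ)}) x (Ico 2 (n - 1)) := by
  have zero_notMem : 0 ∉ (Ico 1 (n : ℤ)).image (Int.cast : ℤ → ZMod n) := by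
    rw [mem_image]
    rintro ⟨k, hk, hk0⟩
    exact intCast_ne_zero_of_mem_Ico hk hk0
  have nonneighbors : {u ∈ (Ico 1 (n : ℤ)).image (Int.cast : ℤ → ZMod n) |
      ¬(circulantGraph {(1 : ZMod n)}).Adj 0 u} = (Ico 2 (n - 1 : ℤ)).image Int.cast := by
    rw [filter_image]
    congr 1
    ext k
    grind [circulantGraph_one_adj_zero_intCast_iff]
  have subarc : Ico 2 (n - 1 : ℤ) ⊆ Ico 1 (n : ℤ) := Ico_subset_Ico (by lia) (by lia)
  rw [← insert_zero_image_intCast_Ico, indepSum_insert _ _ zero_notMem, nonneighbors,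
    indepSum_image x injOn_intCast_Ico fun k hk l hl => circulantGraph_one_adj_intCast_iff hk hl,
    indepSum_image x (injOn_intCast_Ico.mono subarc) fun k hk l hl =>
      circulantGraph_one_adj_intCast_iff (subarc hk) (subarc hl)]

theorem indepSum_cycle_neg_one (R : Type*) [CommRing R] [NeZero n] (hn : 3 ≤ n) :
    indepSum (circulantGraph {(1 : ZMod n)}) (-1 : R) univ = (Chebyshev.C R n).eval 1 := by
  obtain ⟨m, rfl⟩ := Nat.exists_eq_add_of_le' hn
  have h₁ : Ico 1 ((m + 3 : ℕ) : ℤ) = Ico 1 (1 + ((m + 2 : ℕ) : ℤ)) := by congr 1; lia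
  have h₂ : Ico 2 (((m + 3 : ℕ) : ℤ) - 1) = Ico 2 (2 + (m : ℤ)) := by congr 1; lia
  rw [indepSum_cycle, h₁, h₂, indepSum_path_neg_one, indepSum_path_neg_one,
    chebyshev_C_eq_S_sub_S, eval_sub, neg_one_mul, ← sub_eq_add_neg]
  congr 4
  lia

end Cycle

theorem sum_neg_one_pow_card_domino_placements_general (n : ℕ) [NeZero n] (hn : n ≠ 1)
    (h6 : n.Coprime 6) :
    ∑ S ∈ univ.filter
        (fun S : Finset (ZMod n) =>
          ∀ i ∈ S, ∀ j ∈ S, i ≠ j → j ≠ i + 1 ∧ j ≠ i - 1),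
      (-1 : ℤ) ^ S.card = 1 := by
  have three_le : 3 ≤ n := by
    have : n ≠ 2 := by rintro rfl; norm_num at h6
    have := NeZero.ne n
    lia
  calc
    _ = indepSum (circulantGraph {(1 : ZMod n)}) (-1 : ℤ) univ := by
      simp only [indepSum, powerset_univ, sum_filter, isIndepSet_circulantGraph_singleton_iff,
        mem_coe]
    _ = (Chebyshev.C ℤ n).eval 1 := indepSum_cycle_neg_one ℤ three_le
    _ = 1 := chebyshev_C_eval_one_of_coprime_six ℤ h6

/-- Let `p ≥ 5` be a prime.  Summing `(-1)^{|S|}` over all subsets `S` of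
`ℤ/pℤ` in which no two distinct elements are adjacent (domino placements on a
circle of length `p`, including the empty one) gives `1`. -/
theorem sum_neg_one_pow_card_domino_placements (p : ℕ) (hp : p.Prime)
    (hp5 : 5 ≤ p) [NeZero p] :
    ∑ S ∈ Finset.univ.filter
        (fun S : Finset (ZMod p) =>
          ∀ i ∈ S, ∀ j ∈ S, i ≠ j → j ≠ i + 1 ∧ j ≠ i - 1),
      (-1 : ℤ) ^ S.card = 1 :=
  sum_neg_one_pow_card_domino_placements_general p hp.ne_one <|
    ((Nat.coprime_primes hp Nat.prime_two).2 (by lia)).mul_right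
      ((Nat.coprime_primes hp Nat.prime_three).2 (by lia))
end
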